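/- (Pólya–Benz theorem.) Let T : ℝ[X] → ℝ[X] be a nonzero linear map satisfying T(p') = (T p)' for all p ∈ ℝ[X]. Then the following are equivalent: (i) for every p ∈ ℝ[X] all of whose complex roots are real, T p is either the zero polynomial or has all of its complex roots real; (ii) there is an entire function f of LP form such that T p = Σ_{k≥0} (f^{(k)}(0)/k!)·p^{(k)} for every p ∈ ℝ[X] (the sum being finite since p^{(k)} = 0 for k > deg p). -/

import Mathlib

open Complex Filter Topology Polynomial

/-!
An operator commuting with `D` is a power series `∑ c k Dᵏ`; the theorem identifies the symbols
`∑ c k zᵏ` for which the operator preserves real-rootedness.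

**LP symbols preserve real-rootedness.** A complex polynomial `p` is zero or has only real roots if
and only if `‖p (x + i y)‖` is monotone in `|y|` for each `x` (`VertMono`). In this form the
property passes to pointwise limits without an appeal to Hurwitz's theorem. The operators `u + v D`
with `u`, `v` real preserve it, because all terms of `p' / p = ∑ 1 / (z - r)` have imaginary part of
the same sign at a non-real `z` (`VertMono.add_derivative`). Hence so do polynomials in `D` with
only real roots. A function of LP form is a limit of such polynomials, Taylor coefficients converge
by Cauchy's formula (`tendsto_iteratedDeriv_zero`), and only finitely many of them act on a given
polynomial.

**Preservers have LP symbols.** Let `c m` be the first nonzero coefficient of the symbol. The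
polynomial `T (X ^ (N + m))` has only real roots; reversing and rescaling it gives a product
`∏ (1 - a_{N,j} X)` with `a_{N,j}` real, whose coefficient of order `k` is `c (m + k) / c m` times
`N (N - 1) ⋯ (N - k + 1) / N ^ k`, a factor tending to `1` (`exists_jensen_roots`). Convergence of
the coefficients of order one and two means that `∑ a_{N,j}` and `∑ a_{N,j} ^ 2` converge. With the
`a_{N,j}` in order of decreasing modulus this bounds `|a_{N,j}|` by a multiple of `1 / √(j + 1)`, so
along a subsequence `a_{N,j}` tends to some `α j` for every `j`. The genus-two factors
`(1 - w) exp (w + w² / 2)` differ from `1` by `O(|w|³)`, and `∑ (j + 1) ^ (-3/2)` converges, so the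
genus-two product is continuous on the corresponding box of sequences. Putting the exponential
factors back, the products converge to a function of LP form, where the part of `∑ a_{N,j} ^ 2` lost
in the limit provides the Gaussian factor (`exists_laguerre_limit`). Cauchy's formula then shows that
its Taylor coefficients are the `c k` (`exists_lp_symbol`).
-/

/-! ### Convergence of Taylor coefficients -/

/-- By Cauchy's formula and dominated convergence, pointwise convergence on the unit circle together
with a uniform bound there forces the Taylor coefficients at `0` to converge. -/
lemma tendsto_iteratedDeriv_zero {F : ℕ → ℂ → ℂ} {f : ℂ → ℂ}
    (hF : ∀ n, Differentiable ℂ (F n)) (hf : Differentiable ℂ f)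
    (hlim : ∀ z : ℂ, ‖z‖ = 1 → Tendsto (fun n => F n z) atTop (𝓝 (f z)))
    {M : ℝ} (hM : ∀ᶠ n in atTop, ∀ z : ℂ, ‖z‖ = 1 → ‖F n z‖ ≤ M) (k : ℕ) :
    Tendsto (fun n => iteratedDeriv k (F n) 0) atTop (𝓝 (iteratedDeriv k f 0)) := by
  have key : ∀ g : ℂ → ℂ, Differentiable ℂ g → iteratedDeriv k g 0 =
      (2 * Real.pi * I / k.factorial)⁻¹ * ∮ z in C((0 : ℂ), 1), (1 / (z - 0) ^ (k + 1)) • g z := by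
    intro g hg
    rw [DifferentiableOn.circleIntegral_one_div_sub_center_pow_smul one_pos k hg.differentiableOn,
      smul_eq_mul, inv_mul_cancel_left₀]
    exact div_ne_zero Complex.two_pi_I_ne_zero (by exact_mod_cast k.factorial_ne_zero)
  rw [key f hf]
  simp_rw [fun n => key (F n) (hF n)]
  refine Tendsto.const_mul _ ?_
  have hn : ∀ θ : ℝ, ‖circleMap 0 1 θ‖ = 1 := by intro θ; simp
  refine intervalIntegral.tendsto_integral_filter_of_dominated_convergence (fun _ => M) ?_ ?_ ?_ ?_
  · refine Eventually.of_forall fun n => Continuous.aestronglyMeasurable ?_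
    have h1 : Continuous (fun θ => F n (circleMap 0 1 θ)) :=
      (hF n).continuous.comp (continuous_circleMap 0 1)
    have h2 : Continuous fun θ : ℝ => 1 / (circleMap 0 1 θ - 0) ^ (k + 1) := by
      refine continuous_const.div (by fun_prop) fun θ => ?_
      refine pow_ne_zero _ ?_
      rw [sub_zero, ← norm_ne_zero_iff, hn]; exact one_ne_zero
    have h3 : Continuous fun θ : ℝ => deriv (circleMap 0 1) θ := by
      simp only [deriv_circleMap]; fun_prop
    exact h3.smul (h2.smul h1)
  · filter_upwards [hM] with n hn'
    refine Eventually.of_forall fun θ _ => ?_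
    simpa [norm_mul] using hn' _ (hn θ)
  · simp
  · refine Eventually.of_forall fun θ _ => ?_
    exact ((hlim _ (hn θ)).const_mul _).const_mul _

/-! ### Canonical products of genus one and two -/

/-- The primary factor of genus one, `(1 - w) exp w`. -/
noncomputable def primOne (w : ℂ) : ℂ := (1 - w) * Complex.exp w

/-- The primary factor of genus two, `(1 - w) exp (w + w² / 2)`. -/
noncomputable def primTwo (w : ℂ) : ℂ := (1 - w) * Complex.exp (w + w ^ 2 / 2)

lemma primOne_differentiable : Differentiable ℂ primOne := by
  unfold primOne; fun_prop

lemma primTwo_differentiable : Differentiable ℂ primTwo := by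
  unfold primTwo; fun_prop

/-- The mean value inequality, the derivative of `primOne` at `u` being `-u exp u`. -/
lemma norm_primOne_sub_one_le {R : ℝ} {w : ℂ} (hw : ‖w‖ ≤ R) :
    ‖primOne w - 1‖ ≤ Real.exp R * ‖w‖ ^ 2 := by
  have h := Convex.norm_image_sub_le_of_norm_hasDerivWithin_le (f := primOne)
    (f' := fun u => -u * Complex.exp u) (s := Metric.closedBall (0 : ℂ) ‖w‖)
    (C := ‖w‖ * Real.exp R) (x := 0) (y := w) ?_ ?_ (convex_closedBall _ _) (by simp) (by simp)
  · have e : ‖w‖ * Real.exp R * ‖w‖ = Real.exp R * ‖w‖ ^ 2 := by ring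
    simpa [primOne, e] using h
  · intro u _
    have h1 : HasDerivAt primOne ((0 - 1) * Complex.exp u + (1 - u) * Complex.exp u) u :=
      ((hasDerivAt_const u (1 : ℂ)).sub (hasDerivAt_id u)).mul (Complex.hasDerivAt_exp u)
    convert h1.hasDerivWithinAt using 1
    ring
  · intro u hu
    have hu' : ‖u‖ ≤ ‖w‖ := by simpa using hu
    rw [norm_mul, norm_neg, Complex.norm_exp]
    gcongr
    exact (Complex.re_le_norm u).trans (hu'.trans hw)

/-- The mean value inequality, the derivative of `primTwo` at `u` being `-u² exp (u + u² / 2)`. -/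
lemma norm_primTwo_sub_one_le {R : ℝ} {w : ℂ} (hw : ‖w‖ ≤ R) :
    ‖primTwo w - 1‖ ≤ Real.exp (R + R ^ 2 / 2) * ‖w‖ ^ 3 := by
  have h := Convex.norm_image_sub_le_of_norm_hasDerivWithin_le (f := primTwo)
    (f' := fun u => -u ^ 2 * Complex.exp (u + u ^ 2 / 2)) (s := Metric.closedBall (0 : ℂ) ‖w‖)
    (C := ‖w‖ ^ 2 * Real.exp (R + R ^ 2 / 2)) (x := 0) (y := w) ?_ ?_ (convex_closedBall _ _)
    (by simp) (by simp)
  · have e : ‖w‖ ^ 2 * Real.exp (R + R ^ 2 / 2) * ‖w‖ = Real.exp (R + R ^ 2 / 2) * ‖w‖ ^ 3 := by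
      ring
    simpa [primTwo, e] using h
  · intro u _
    have h0 : HasDerivAt (fun u : ℂ => u + u ^ 2 / 2) (1 + u) u := by
      have := (hasDerivAt_id u).add (((hasDerivAt_id u).pow 2).div_const 2)
      convert! this using 1
      simp
    have h1 : HasDerivAt primTwo ((0 - 1) * Complex.exp (u + u ^ 2 / 2) +
        (1 - u) * (Complex.exp (u + u ^ 2 / 2) * (1 + u))) u :=
      ((hasDerivAt_const u (1 : ℂ)).sub (hasDerivAt_id u)).mul h0.cexp
    convert h1.hasDerivWithinAt using 1
    ring
  · intro u hu
    have hu' : ‖u‖ ≤ ‖w‖ := by simpa using hu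
    rw [norm_mul, norm_neg, norm_pow, Complex.norm_exp]
    have h2 : (u + u ^ 2 / 2).re ≤ R + R ^ 2 / 2 := by
      refine (Complex.re_le_norm _).trans ((norm_add_le _ _).trans ?_)
      have : ‖u‖ ≤ R := hu'.trans hw
      rw [norm_div, norm_pow]
      simp only [Complex.norm_ofNat]
      gcongr
    gcongr

/-- The canonical product of genus one converges locally uniformly to an entire function. -/
lemma exists_canonical_product {α : ℕ → ℝ} (hα : Summable fun j => α j ^ 2) :
    ∃ P : ℂ → ℂ, Differentiable ℂ P ∧ TendstoLocallyUniformly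
      (fun (N : ℕ) (z : ℂ) => ∏ j ∈ Finset.range N, primOne ((α j : ℂ) * z)) P atTop := by
  have hbd : ∃ A, ∀ j, |α j| ≤ A := by
    have := hα.tendsto_atTop_zero.bddAbove_range
    obtain ⟨B, hB⟩ := this
    refine ⟨√B, fun j => Real.abs_le_sqrt (hB ⟨j, rfl⟩)⟩
  obtain ⟨A, hA⟩ := hbd
  have hloc : TendstoLocallyUniformly
      (fun (N : ℕ) (z : ℂ) => ∏ j ∈ Finset.range N, primOne ((α j : ℂ) * z))
      (fun z => ∏' j, (1 + (primOne ((α j : ℂ) * z) - 1))) atTop := by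
    rw [tendstoLocallyUniformly_iff_forall_isCompact]
    intro K hK
    obtain ⟨R, hR⟩ := hK.isBounded.exists_norm_le
    have := (Summable.hasProdUniformlyOn_nat_one_add (α := ℂ)
      (f := fun j z => primOne ((α j : ℂ) * z) - 1) (K := K)
      (u := fun j => Real.exp (A * R) * R ^ 2 * α j ^ 2) hK (hα.mul_left _) ?_ ?_)
    · simpa using this.tendstoUniformlyOn_finsetRange
    · refine Eventually.of_forall fun j z hz => ?_
      have hz' := hR z hz
      have hR0 : 0 ≤ R := (norm_nonneg _).trans hz'
      have hA0 : 0 ≤ A := (abs_nonneg _).trans (hA j)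
      have hn : ‖(α j : ℂ) * z‖ = |α j| * ‖z‖ := by simp
      have := norm_primOne_sub_one_le (R := A * R) (w := (α j : ℂ) * z)
        (by rw [hn]; exact mul_le_mul (hA j) hz' (norm_nonneg _) hA0)
      refine this.trans ?_
      rw [hn, mul_pow, sq_abs, mul_assoc, mul_comm (α j ^ 2)]
      gcongr
    · intro j
      have := primOne_differentiable.continuous
      fun_prop
  refine ⟨_, ?_, hloc⟩
  rw [← differentiableOn_univ]
  refine (tendstoLocallyUniformlyOn_univ.2 hloc).differentiableOn (Eventually.of_forall fun N => ?_)
    isOpen_univ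
  rw [differentiableOn_univ]
  have := primOne_differentiable
  fun_prop

/-- Continuity of the genus-two canonical product in its parameters, on a box of sequences
`|A j| ≤ b j` with `∑ b j ^ 3 < ∞`. -/
lemma tendsto_prod_primTwo {A : ℕ → ℕ → ℝ} {α b : ℕ → ℝ} {d : ℕ → ℕ}
    (hb : Summable fun j => b j ^ 3) (hA : ∀ n j, |A n j| ≤ b j)
    (hsupp : ∀ n j, d n ≤ j → A n j = 0)
    (hlim : ∀ j, Tendsto (fun n => A n j) atTop (𝓝 (α j))) (z : ℂ) :
    ∃ L : ℂ, Tendsto (fun n => ∏ j ∈ Finset.range (d n), primTwo ((A n j : ℂ) * z)) atTop (𝓝 L) ∧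
      Tendsto (fun N => ∏ j ∈ Finset.range N, primTwo ((α j : ℂ) * z)) atTop (𝓝 L) := by
  have hb0 : ∀ j, 0 ≤ b j := fun j => (abs_nonneg _).trans (hA 0 j)
  obtain ⟨B, hB⟩ := hb.tendsto_atTop_zero.bddAbove_range
  have hbB : ∀ j, b j ≤ B + 1 := by
    intro j
    have h1 : b j ^ 3 ≤ B := hB ⟨j, rfl⟩
    by_contra! h
    have hB0 : 0 ≤ B := (pow_nonneg (hb0 j) 3).trans h1
    have h2 : (B + 1) ^ 3 < b j ^ 3 := by gcongr
    nlinarith [pow_nonneg hB0 3, pow_nonneg hB0 2]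
  set K : Set (ℕ → ℝ) := Set.pi Set.univ fun j => Set.Icc (-b j) (b j) with hK
  have hKc : IsCompact K := isCompact_univ_pi fun j => isCompact_Icc
  have hAK : ∀ n, A n ∈ K := fun n j _ => abs_le.1 (hA n j)
  have hαK : α ∈ K := fun j _ => isClosed_Icc.mem_of_tendsto (hlim j)
    (Eventually.of_forall fun n => abs_le.1 (hA n j))
  set R := (B + 1) * ‖z‖ with hR
  have hcont : ∀ j, Continuous fun x : ℕ → ℝ => primTwo ((x j : ℂ) * z) - 1 := by
    intro j
    have := primTwo_differentiable.continuous
    fun_prop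
  have hU := Summable.hasProdUniformlyOn_nat_one_add (α := ℕ → ℝ) (K := K)
    (f := fun j x => primTwo ((x j : ℂ) * z) - 1)
    (u := fun j => Real.exp (R + R ^ 2 / 2) * ‖z‖ ^ 3 * b j ^ 3) hKc (hb.mul_left _)
    (Eventually.of_forall fun j x hx => by
      have hx' : |x j| ≤ b j := abs_le.2 (hx j trivial)
      have hn : ‖(x j : ℂ) * z‖ = |x j| * ‖z‖ := by simp
      refine (norm_primTwo_sub_one_le (R := R) ?_).trans ?_
      · rw [hn]; exact mul_le_mul_of_nonneg_right (hx'.trans (hbB j)) (norm_nonneg _)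
      · rw [hn, mul_assoc, ← mul_pow, mul_comm ‖z‖]
        gcongr) (fun j => (hcont j).continuousOn)
  have hPc : ContinuousOn (fun x : ℕ → ℝ => ∏' j, (1 + (primTwo ((x j : ℂ) * z) - 1))) K :=
    hU.tendstoUniformlyOn_finsetRange.continuousOn
      (Frequently.of_forall fun N => by
        refine Continuous.continuousOn (continuous_finsetProd _ fun j _ => ?_)
        exact continuous_const.add (hcont j))
  refine ⟨∏' j, (1 + (primTwo ((α j : ℂ) * z) - 1)), ?_,
    by simpa only [add_sub_cancel] using hU.tendstoUniformlyOn_finsetRange.tendsto_at hαK⟩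
  have h1 := (hPc α hαK).tendsto.comp (tendsto_nhdsWithin_iff.2
    ⟨tendsto_pi_nhds.2 hlim, Eventually.of_forall hAK⟩)
  refine h1.congr fun n => ?_
  simp only [Function.comp, add_sub_cancel]
  refine tprod_eq_prod fun j hj => ?_
  rw [hsupp n j (by simpa using hj)]
  simp [primTwo]

lemma summable_div_sqrt_cube (M : ℝ) : Summable fun j : ℕ => (M / √((j : ℝ) + 1)) ^ 3 := by
  have h : Summable fun j : ℕ => M ^ 3 * (1 / ((j + 1 : ℕ) : ℝ) ^ (3 / 2 : ℝ)) :=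
    ((summable_nat_add_iff 1).2 (Real.summable_one_div_nat_rpow.2 (by norm_num))).mul_left _
  refine h.congr fun j => ?_
  have h0 : (0 : ℝ) ≤ (j : ℝ) + 1 := by positivity
  rw [div_pow, Real.sqrt_eq_rpow, ← Real.rpow_natCast (((j : ℝ) + 1) ^ (1 / 2 : ℝ)),
    ← Real.rpow_mul h0]
  norm_num
  rfl

/-- Compactness for products of real linear factors. If the first two power sums of the rows of `A`
converge, then `|A n j| ≤ const / √(j + 1)`, so a subsequence of rows converges coordinatewise, to `α`
say, and along it the products converge to a function of LP form. The part of `∑ A n j ^ 2` that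
escapes to infinity, `p - ∑' α j ^ 2 ≥ 0`, becomes the `σ ^ 2` of the Gaussian factor. -/
lemma exists_laguerre_limit {A : ℕ → ℕ → ℝ} {d : ℕ → ℕ}
    (hsupp : ∀ n j, d n ≤ j → A n j = 0) (hanti : ∀ n, Antitone fun j => |A n j|) {s p : ℝ}
    (hs : Tendsto (fun n => ∑ j ∈ Finset.range (d n), A n j) atTop (𝓝 s))
    (hp : Tendsto (fun n => ∑ j ∈ Finset.range (d n), A n j ^ 2) atTop (𝓝 p)) :
    ∃ (α : ℕ → ℝ) (σ : ℝ) (P : ℂ → ℂ) (φ : ℕ → ℕ), (Summable fun j => α j ^ 2) ∧ StrictMono φ ∧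
      Differentiable ℂ P ∧
      TendstoLocallyUniformly
        (fun (N : ℕ) (z : ℂ) => ∏ j ∈ Finset.range N, primOne ((α j : ℂ) * z)) P atTop ∧
      ∀ z : ℂ, Tendsto (fun n => ∏ j ∈ Finset.range (d (φ n)), (1 - (A (φ n) j : ℂ) * z)) atTop
        (𝓝 (Complex.exp (-(s : ℂ) * z - (σ : ℂ) ^ 2 / 2 * z ^ 2) * P z)) := by
  obtain ⟨Q, hQ⟩ := hp.bddAbove_range
  have hQ : ∀ n, ∑ j ∈ Finset.range (d n), A n j ^ 2 ≤ Q := fun n => hQ ⟨n, rfl⟩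
  have hpart : ∀ n K, ∑ j ∈ Finset.range K, A n j ^ 2 ≤ ∑ j ∈ Finset.range (d n), A n j ^ 2 := by
    intro n K
    rcases le_total K (d n) with h | h
    · exact Finset.sum_le_sum_of_subset_of_nonneg (Finset.range_mono h) fun _ _ _ => sq_nonneg _
    · refine (Finset.sum_subset (Finset.range_mono h) fun j _ hj => ?_).symm.le
      rw [hsupp n j (by simpa using hj)]; simp
  set b : ℕ → ℝ := fun j => √Q / √((j : ℝ) + 1) with hb
  have hAb : ∀ n j, |A n j| ≤ b j := by
    intro n j
    have h1 : ((j : ℝ) + 1) * A n j ^ 2 ≤ Q := by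
      calc ((j : ℝ) + 1) * A n j ^ 2 = ∑ i ∈ Finset.range (j + 1), A n j ^ 2 := by simp
        _ ≤ ∑ i ∈ Finset.range (j + 1), A n i ^ 2 := by
            refine Finset.sum_le_sum fun i hi => ?_
            exact sq_le_sq.2 (hanti n (Nat.lt_succ_iff.1 (Finset.mem_range.1 hi)))
        _ ≤ Q := (hpart n _).trans (hQ n)
    rw [hb]
    simp only
    rw [← Real.sqrt_div' _ (by positivity)]
    refine Real.abs_le_sqrt ?_
    rw [le_div_iff₀ (by positivity)]
    linarith
  obtain ⟨α, -, φ, hφ, hconv⟩ := (isCompact_univ_pi fun j => isCompact_Icc :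
    IsCompact (Set.pi Set.univ fun j => Set.Icc (-b j) (b j))).tendsto_subseq
    (x := A) (fun n j _ => abs_le.1 (hAb n j))
  have hconv : ∀ j, Tendsto (fun n => A (φ n) j) atTop (𝓝 (α j)) := tendsto_pi_nhds.1 hconv
  have hpφ := hp.comp hφ.tendsto_atTop
  have hsφ := hs.comp hφ.tendsto_atTop
  have hαp : ∀ K, ∑ j ∈ Finset.range K, α j ^ 2 ≤ p := fun K =>
    le_of_tendsto_of_tendsto (tendsto_finsetSum _ fun j _ => (hconv j).pow 2) hpφ
      (Eventually.of_forall fun n => hpart _ K)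
  have hsum : Summable fun j => α j ^ 2 :=
    summable_of_sum_range_le (fun _ => sq_nonneg _) hαp
  have htsum : ∑' j, α j ^ 2 ≤ p := Real.tsum_le_of_sum_range_le (fun _ => sq_nonneg _) hαp
  obtain ⟨P, hPd, hP⟩ := exists_canonical_product hsum
  refine ⟨α, √(p - ∑' j, α j ^ 2), P, φ, hsum, hφ, hPd, hP, fun z => ?_⟩
  obtain ⟨L, hL1, hL2⟩ := tendsto_prod_primTwo (d := d ∘ φ) (A := fun n => A (φ n))
    (summable_div_sqrt_cube √Q) (fun n j => hAb _ j) (fun n j h => hsupp _ j h) hconv z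
  -- In the limit the genus-two product is the genus-one product times a Gaussian factor.
  have hLP : L = P z * Complex.exp (((∑' j, α j ^ 2 : ℝ) : ℂ) * z ^ 2 / 2) := by
    refine tendsto_nhds_unique hL2 ?_
    have h1 : Tendsto (fun N => ((∑ j ∈ Finset.range N, α j ^ 2 : ℝ) : ℂ)) atTop
        (𝓝 ((∑' j, α j ^ 2 : ℝ) : ℂ)) :=
      (Complex.continuous_ofReal.tendsto _).comp hsum.hasSum.tendsto_sum_nat
    have hPz : Tendsto (fun N => ∏ j ∈ Finset.range N, primOne ((α j : ℂ) * z)) atTop (𝓝 (P z)) :=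
      (tendstoLocallyUniformlyOn_univ.2 hP).tendsto_at (Set.mem_univ z)
    refine (hPz.mul ((h1.mul_const (z ^ 2)).div_const 2).cexp).congr fun N => ?_
    push_cast
    rw [Finset.sum_mul, Finset.sum_div, Complex.exp_sum, ← Finset.prod_mul_distrib]
    refine Finset.prod_congr rfl fun j _ => ?_
    rw [primOne, primTwo, mul_assoc, ← Complex.exp_add]
    congr 2
    ring
  have h2 : Tendsto (fun n => Complex.exp (-((∑ j ∈ Finset.range (d (φ n)), A (φ n) j : ℝ) : ℂ) * z
      - ((∑ j ∈ Finset.range (d (φ n)), A (φ n) j ^ 2 : ℝ) : ℂ) * z ^ 2 / 2)) atTop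
      (𝓝 (Complex.exp (-(s : ℂ) * z - (p : ℂ) * z ^ 2 / 2))) := by
    have e1 := (Complex.continuous_ofReal.tendsto _).comp hsφ
    have e2 := (Complex.continuous_ofReal.tendsto _).comp hpφ
    exact ((e1.neg.mul_const z).sub ((e2.mul_const (z ^ 2)).div_const 2)).cexp
  have h3 := h2.mul hL1
  have hlimeq : Complex.exp (-(s : ℂ) * z - (p : ℂ) * z ^ 2 / 2) * L =
      Complex.exp (-(s : ℂ) * z - ((√(p - ∑' j, α j ^ 2) : ℝ) : ℂ) ^ 2 / 2 * z ^ 2) * P z := by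
    rw [← Complex.ofReal_pow, Real.sq_sqrt (sub_nonneg.2 htsum), hLP, mul_comm (P z), ← mul_assoc,
      ← Complex.exp_add]
    congr 2
    push_cast
    ring
  rw [hlimeq] at h3
  refine h3.congr fun n => ?_
  simp only [Function.comp]
  push_cast
  rw [neg_mul, Finset.sum_mul, Finset.sum_mul, Finset.sum_div, ← Finset.sum_neg_distrib,
    ← Finset.sum_sub_distrib, Complex.exp_sum, ← Finset.prod_mul_distrib]
  refine Finset.prod_congr rfl fun j _ => ?_
  rw [primTwo, mul_left_comm, ← Complex.exp_add]
  ring_nf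
  simp only [Complex.exp_zero, mul_one]
  ring

/-! ### Real-rootedness as monotonicity along vertical lines -/

/-- On every vertical line, `‖p‖` grows with the distance from the real axis. For complex
polynomials this is equivalent to being zero or having only real roots, and it visibly survives
pointwise limits. -/
def VertMono (p : ℂ[X]) : Prop :=
  ∀ x y y' : ℝ, |y'| ≤ |y| → ‖p.eval (x + y' * I)‖ ≤ ‖p.eval (x + y * I)‖

/-- Each factor `|x + i y - r|` with `r` real is monotone in `|y|`. -/
lemma vertMono_of_roots {p : ℂ[X]} (hp : ∀ z ∈ p.roots, z.im = 0) : VertMono p := by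
  intro x y y' hy
  rw [(IsAlgClosed.splits p).eval_eq_prod_roots, (IsAlgClosed.splits p).eval_eq_prod_roots,
    norm_mul, norm_mul]
  gcongr
  have : ∀ s : Multiset ℂ, (∀ z ∈ s, z.im = 0) →
      ‖(s.map fun a => (x : ℂ) + y' * I - a).prod‖ ≤ ‖(s.map fun a => (x : ℂ) + y * I - a).prod‖ := by
    intro s
    induction s using Multiset.induction_on with
    | empty => simp
    | cons a s ih =>
      intro h
      simp only [Multiset.map_cons, Multiset.prod_cons, norm_mul]
      refine mul_le_mul ?_ (ih fun z hz => h z (Multiset.mem_cons_of_mem hz)) (norm_nonneg _)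
        (norm_nonneg _)
      have ha := h a (Multiset.mem_cons_self a s)
      rw [← sq_le_sq₀ (norm_nonneg _) (norm_nonneg _), ← Complex.normSq_eq_norm_sq,
        ← Complex.normSq_eq_norm_sq, Complex.normSq_apply, Complex.normSq_apply]
      have := sq_le_sq.2 hy
      simp [ha]
      nlinarith
  exact this _ hp

/-- A non-real root would make `p` vanish on the whole vertical segment joining it to its
conjugate. -/
lemma VertMono.roots_real {p : ℂ[X]} (hp : VertMono p) : ∀ z ∈ p.roots, z.im = 0 := by
  intro z hz
  by_contra him
  have hp0 : p ≠ 0 := ne_zero_of_mem_roots hz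
  have hroot : p.eval z = 0 := (mem_roots'.1 hz).2
  refine hp0 (eq_zero_of_infinite_isRoot p ?_)
  have hinf : (Set.Icc (-|z.im|) |z.im|).Infinite :=
    Set.Icc_infinite (by have := abs_pos.2 him; linarith)
  refine (hinf.image (f := fun t : ℝ => (z.re : ℂ) + t * I) ?_).mono ?_
  · intro a _ b _ h
    have := congrArg Complex.im h
    simpa using this
  · rintro _ ⟨t, ht, rfl⟩
    have h1 := hp z.re z.im t (abs_le.2 ht)
    rw [Complex.re_add_im, hroot, norm_zero] at h1
    exact norm_le_zero_iff.1 h1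

lemma vertMono_of_tendsto {p : ℕ → ℂ[X]} {q : ℂ[X]} (hp : ∀ n, VertMono (p n))
    (h : ∀ z, Tendsto (fun n => (p n).eval z) atTop (𝓝 (q.eval z))) : VertMono q := by
  intro x y y' hy
  exact le_of_tendsto_of_tendsto (h _).norm (h _).norm (Eventually.of_forall fun n => hp n x y y' hy)

/-- The operator `u + v D` preserves real-rootedness: at a non-real point all terms of
`p' / p = ∑ 1 / (z - r)` have imaginary part of the same sign. -/
lemma VertMono.add_derivative {p : ℂ[X]} (hp : VertMono p) (u v : ℝ) :
    VertMono (C (u : ℂ) * p + C (v : ℂ) * derivative p) := by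
  refine vertMono_of_roots fun z hz => ?_
  by_contra him
  have hq0 := ne_zero_of_mem_roots hz
  have hroot := (mem_roots'.1 hz).2
  rw [IsRoot.def, eval_add, eval_mul, eval_mul, eval_C, eval_C] at hroot
  have hp0 : p ≠ 0 := by rintro rfl; simp at hq0
  have hpz : p.eval z ≠ 0 := fun h => him (hp.roots_real z ((mem_roots hp0).2 h))
  rw [(IsAlgClosed.splits p).eval_derivative_eq_eval_mul_sum hpz] at hroot
  have h1 : (u : ℂ) + v * (p.roots.map fun a => 1 / (z - a)).sum = 0 := by
    refine mul_left_cancel₀ hpz ?_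
    linear_combination hroot
  have hsum : ∀ s : Multiset ℂ, (∀ a ∈ s, a.im = 0) →
      ∃ t : ℝ, 0 ≤ t ∧ (s ≠ 0 → 0 < t) ∧ (s.map fun a => 1 / (z - a)).sum.im = -z.im * t := by
    intro s
    induction s using Multiset.induction_on with
    | empty => exact fun _ => ⟨0, le_rfl, by simp, by simp⟩
    | cons a s ih =>
      intro h
      obtain ⟨t, ht0, -, ht⟩ := ih fun b hb => h b (Multiset.mem_cons_of_mem hb)
      have ha := h a (Multiset.mem_cons_self a s)
      have hpos : 0 < Complex.normSq (z - a) := by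
        rw [Complex.normSq_pos, sub_ne_zero]
        rintro rfl
        exact him ha
      refine ⟨t + 1 / Complex.normSq (z - a), by positivity, fun _ => by positivity, ?_⟩
      simp only [Multiset.map_cons, Multiset.sum_cons, Complex.add_im, ht]
      rw [one_div, Complex.inv_im]
      simp [ha]
      ring
  obtain ⟨t, -, ht, him'⟩ := hsum _ hp.roots_real
  have h2 := congrArg Complex.im h1
  simp only [Complex.add_im, Complex.ofReal_im, Complex.mul_im, Complex.ofReal_re, zero_mul,
    him', zero_add, add_zero, Complex.zero_im] at h2
  rcases eq_or_ne v 0 with rfl | hv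
  · have hu : (u : ℂ) = 0 := by simpa using h1
    simp [hu] at hq0
  · by_cases hs : p.roots = 0
    · have hu : (u : ℂ) = 0 := by simpa [hs] using h1
      have hdeg : p.natDegree = 0 := by
        rw [(IsAlgClosed.splits p).natDegree_eq_card_roots, hs]; simp
      rw [hu, eq_C_of_natDegree_eq_zero hdeg] at hq0
      simp at hq0
    · have := ht hs
      have hne : v * (-z.im * t) ≠ 0 :=
        mul_ne_zero hv (mul_ne_zero (neg_ne_zero.2 him) this.ne')
      exact hne h2

/-! ### Differential operators of infinite order -/

/-- The operator `∑ f⁽ᵏ⁾(0)/k! Dᵏ` attached to `f`. The sum stops at `deg p`, beyond which the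
derivatives of `p` vanish. -/
noncomputable def diffOp (f : ℂ → ℂ) (p : ℂ[X]) : ℂ[X] :=
  ∑ k ∈ Finset.range (p.natDegree + 1),
    C (iteratedDeriv k f 0 / (Nat.factorial k : ℂ)) * derivative^[k] p

lemma iteratedDeriv_eval_zero (q : ℂ[X]) (k : ℕ) :
    iteratedDeriv k (fun z => q.eval z) 0 = k.factorial * q.coeff k := by
  have h : ∀ k, iteratedDeriv k (fun z => q.eval z) = fun z => (derivative^[k] q).eval z := by
    intro k
    induction k with
    | zero => simp
    | succ k ih =>
      rw [iteratedDeriv_succ, ih]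
      funext z
      rw [Polynomial.deriv, Function.iterate_succ_apply']
  rw [h]
  change eval 0 _ = _
  rw [← coeff_zero_eq_eval_zero, coeff_iterate_derivative]
  simp [Nat.descFactorial_self]

lemma diffOp_eval_poly (q p : ℂ[X]) :
    diffOp (fun z => q.eval z) p = aeval (derivative : ℂ[X] →ₗ[ℂ] ℂ[X]) q p := by
  have h0 : ∀ M, ∑ k ∈ Finset.range (p.natDegree + 1), C (q.coeff k) * derivative^[k] p =
      ∑ k ∈ Finset.range (p.natDegree + 1 + M), C (q.coeff k) * derivative^[k] p := by
    intro M
    refine Finset.sum_subset (Finset.range_mono (by omega)) fun k _ hk => ?_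
    rw [iterate_derivative_eq_zero (by simpa using hk), mul_zero]
  have h1 : ∀ k, iteratedDeriv k (fun z => q.eval z) 0 / (k.factorial : ℂ) = q.coeff k := by
    intro k
    rw [iteratedDeriv_eval_zero, mul_div_cancel_left₀]
    exact_mod_cast k.factorial_ne_zero
  unfold diffOp
  simp_rw [h1]
  rw [h0 (q.natDegree + 1), aeval_eq_sum_range' (n := p.natDegree + 1 + (q.natDegree + 1)) (by omega)]
  simp [LinearMap.sum_apply, Module.End.pow_apply, smul_eq_C_mul]

/-- Polynomials in `D` that preserve real-rootedness. -/
def Preserves (q : ℂ[X]) : Prop :=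
  ∀ p : ℂ[X], VertMono p → VertMono (aeval (derivative : ℂ[X] →ₗ[ℂ] ℂ[X]) q p)

lemma Preserves.mul {q r : ℂ[X]} (hq : Preserves q) (hr : Preserves r) : Preserves (q * r) := by
  intro p hp
  rw [map_mul, Module.End.mul_apply]
  exact hq _ (hr _ hp)

lemma preserves_linear (u v : ℝ) : Preserves (C (u : ℂ) + C (v : ℂ) * X) := by
  intro p hp
  have := hp.add_derivative u v
  convert this using 1
  rw [map_add, map_mul, aeval_C, aeval_C, aeval_X]
  simp [Module.algebraMap_end_apply, smul_eq_C_mul]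

lemma preserves_C (u : ℝ) : Preserves (C (u : ℂ)) := by
  simpa using preserves_linear u 0

lemma preserves_X : Preserves (X : ℂ[X]) := by
  simpa using preserves_linear 0 1

lemma Preserves.pow {q : ℂ[X]} (hq : Preserves q) (n : ℕ) : Preserves (q ^ n) := by
  induction n with
  | zero => simpa using preserves_C 1
  | succ n ih => rw [pow_succ]; exact ih.mul hq

lemma preserves_prod {ι : Type*} (s : Finset ι) {q : ι → ℂ[X]} (h : ∀ i ∈ s, Preserves (q i)) :
    Preserves (∏ i ∈ s, q i) := by
  classical
  induction s using Finset.induction_on with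
  | empty => simpa using preserves_C 1
  | insert a s ha ih =>
    rw [Finset.prod_insert ha]
    exact (h a (Finset.mem_insert_self a s)).mul (ih fun i hi => h i (Finset.mem_insert_of_mem hi))

/-- Real-rootedness preservation passes to limits of entire functions that are bounded on the
unit circle: Taylor coefficients converge by Cauchy's formula, and only finitely many of them
act on a given polynomial. -/
lemma vertMono_diffOp_of_tendsto {F : ℕ → ℂ → ℂ} {f : ℂ → ℂ}
    (hF : ∀ n, Differentiable ℂ (F n)) (hf : Differentiable ℂ f)
    (hlim : ∀ z : ℂ, ‖z‖ = 1 → Tendsto (fun n => F n z) atTop (𝓝 (f z)))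
    {M : ℝ} (hM : ∀ᶠ n in atTop, ∀ z : ℂ, ‖z‖ = 1 → ‖F n z‖ ≤ M) {p : ℂ[X]}
    (hp : ∀ n, VertMono (diffOp (F n) p)) : VertMono (diffOp f p) := by
  refine vertMono_of_tendsto hp fun z => ?_
  simp only [diffOp, eval_finsetSum, eval_mul, eval_C]
  exact tendsto_finsetSum _ fun k _ =>
    ((tendsto_iteratedDeriv_zero hF hf hlim hM k).div_const _).mul_const _

lemma norm_one_add_div_pow_le (t : ℂ) (n : ℕ) : ‖(1 + t / n) ^ n‖ ≤ Real.exp ‖t‖ := by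
  rcases Nat.eq_zero_or_pos n with rfl | hn
  · simp
  · have h1 : ‖1 + t / n‖ ≤ Real.exp (‖t‖ / n) := by
      refine (norm_add_le _ _).trans ?_
      rw [norm_one, norm_div, Complex.norm_natCast, add_comm]
      exact Real.add_one_le_exp _
    rw [norm_pow]
    refine (pow_le_pow_left₀ (norm_nonneg _) h1 n).trans ?_
    rw [← Real.exp_nat_mul, mul_div_cancel₀]
    exact_mod_cast hn.ne'

/-! ### Functions of LP form act on real-rooted polynomials -/

/-- The partial products of a function of LP form. -/
noncomputable def lpPartial (C₀ : ℝ) (m : ℕ) (c σ : ℝ) (α : ℕ → ℝ) (N : ℕ) (z : ℂ) : ℂ :=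
  (C₀ : ℂ) * z ^ m * Complex.exp (-(c : ℂ) * z - (σ : ℂ) ^ 2 / 2 * z ^ 2) *
    ∏ j ∈ Finset.range N, ((1 - (α j : ℂ) * z) * Complex.exp ((α j : ℂ) * z))

lemma lpPartial_differentiable (C₀ : ℝ) (m : ℕ) (c σ : ℝ) (α : ℕ → ℝ) (N : ℕ) :
    Differentiable ℂ (lpPartial C₀ m c σ α N) := by
  unfold lpPartial; fun_prop

/-- Each partial product is a limit of polynomials all of whose roots are real, since
`exp (a z) = lim (1 + a z / n)ⁿ` and
`exp (-σ² z² / 2) = lim ((1 + σ z / √(2n)) (1 - σ z / √(2n)))ⁿ`. -/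
lemma vertMono_diffOp_lpPartial (C₀ : ℝ) (m : ℕ) (c σ : ℝ) (α : ℕ → ℝ) (N : ℕ) {p : ℂ[X]}
    (hp : VertMono p) : VertMono (diffOp (lpPartial C₀ m c σ α N) p) := by
  set a : ℝ := ∑ j ∈ Finset.range N, α j - c with ha
  let q : ℕ → ℂ[X] := fun n => C (C₀ : ℂ) * X ^ m *
    (C ((1 : ℝ) : ℂ) + C ((a / n : ℝ) : ℂ) * X) ^ n *
    ((C ((1 : ℝ) : ℂ) + C ((σ / √(2 * n) : ℝ) : ℂ) * X) *
      (C ((1 : ℝ) : ℂ) + C ((-(σ / √(2 * n)) : ℝ) : ℂ) * X)) ^ n *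
    ∏ j ∈ Finset.range N, (C ((1 : ℝ) : ℂ) + C ((-α j : ℝ) : ℂ) * X)
  have hq : ∀ n, Preserves (q n) := fun n =>
    ((((preserves_C C₀).mul (preserves_X.pow m)).mul ((preserves_linear _ _).pow n)).mul
      (((preserves_linear _ _).mul (preserves_linear _ _)).pow n)).mul
      (preserves_prod _ fun j _ => preserves_linear _ _)
  have hqe : ∀ n z, (q n).eval z = (C₀ : ℂ) * z ^ m * (1 + (a : ℂ) * z / n) ^ n *
      (1 + (-((σ : ℂ) ^ 2 / 2 * z ^ 2)) / n) ^ n * ∏ j ∈ Finset.range N, (1 - (α j : ℂ) * z) := by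
    intro n z
    have hs : ((√(2 * n) : ℝ) : ℂ) ^ 2 = 2 * n := by
      rw [← Complex.ofReal_pow, Real.sq_sqrt (by positivity)]
      push_cast; rfl
    have e : (1 + ((σ / √(2 * n) : ℝ) : ℂ) * z) * (1 + ((-(σ / √(2 * n)) : ℝ) : ℂ) * z) =
        1 + (-((σ : ℂ) ^ 2 / 2 * z ^ 2)) / n := by
      push_cast
      have : (1 + (σ : ℂ) / ((√(2 * n) : ℝ) : ℂ) * z) * (1 + -((σ : ℂ) / ((√(2 * n) : ℝ) : ℂ)) * z) =
        1 - (σ : ℂ) ^ 2 / ((√(2 * n) : ℝ) : ℂ) ^ 2 * z ^ 2 := by ring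
      rw [this]
      rw [hs, ← div_div]
      ring
    simp only [q, eval_mul, eval_C, eval_pow, eval_X, eval_add, eval_prod]
    rw [Complex.ofReal_one, e]
    push_cast
    congr 2
    · congr 3
      ring
    · funext j
      ring
  refine vertMono_diffOp_of_tendsto (F := fun n z => (q n).eval z)
    (M := |C₀| * Real.exp |a| * Real.exp (σ ^ 2 / 2) * ∏ j ∈ Finset.range N, (1 + |α j|))
    (fun n => (q n).differentiable) (lpPartial_differentiable _ _ _ _ _ _) ?_ ?_ ?_
  · intro z _
    simp only [hqe]
    have h := ((((tendsto_one_add_div_pow_exp ((a : ℂ) * z)).const_mul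
      ((C₀ : ℂ) * z ^ m)).mul (tendsto_one_add_div_pow_exp (-((σ : ℂ) ^ 2 / 2 * z ^ 2)))).mul_const
      (∏ j ∈ Finset.range N, (1 - (α j : ℂ) * z)))
    convert h using 2
    rw [lpPartial, Finset.prod_mul_distrib, ← Complex.exp_sum, ← Finset.sum_mul,
      mul_assoc _ (Complex.exp _) (Complex.exp _), ← Complex.exp_add, mul_comm (∏ j ∈ _, _),
      ← mul_assoc, mul_assoc _ (Complex.exp _) (Complex.exp _), ← Complex.exp_add, ha]
    congr 3
    push_cast
    ring
  · refine Eventually.of_forall fun n z hz => ?_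
    simp only [hqe]
    rw [norm_mul, norm_mul, norm_mul, norm_mul, norm_pow z, hz, one_pow, mul_one,
      Complex.norm_real, Real.norm_eq_abs, norm_prod]
    have b1 : ‖(1 + (a : ℂ) * z / n) ^ n‖ ≤ Real.exp |a| := by
      refine (norm_one_add_div_pow_le _ n).trans_eq ?_
      rw [norm_mul, hz, Complex.norm_real, mul_one, Real.norm_eq_abs]
    have b2 : ‖(1 + (-((σ : ℂ) ^ 2 / 2 * z ^ 2)) / n) ^ n‖ ≤ Real.exp (σ ^ 2 / 2) := by
      refine (norm_one_add_div_pow_le _ n).trans_eq ?_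
      rw [norm_neg, norm_mul, norm_div, norm_pow, norm_pow, hz, Complex.norm_real]
      simp
    have b3 : ∏ j ∈ Finset.range N, ‖1 - (α j : ℂ) * z‖ ≤
        ∏ j ∈ Finset.range N, (1 + |α j|) := by
      refine Finset.prod_le_prod (fun _ _ => norm_nonneg _) fun j _ => ?_
      refine (norm_sub_le _ _).trans_eq ?_
      simp [hz]
    have b4 : 0 ≤ ∏ j ∈ Finset.range N, ‖1 - (α j : ℂ) * z‖ :=
      Finset.prod_nonneg fun _ _ => norm_nonneg _
    gcongr
  · intro n
    rw [diffOp_eval_poly]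
    exact hq n p hp

/-- An entire function of LP form acts on real-rooted polynomials, as a locally uniform limit of its
partial products. -/
lemma vertMono_diffOp_lp {C₀ : ℝ} {m : ℕ} {c σ : ℝ} {α : ℕ → ℝ} {f : ℂ → ℂ}
    (hf : TendstoLocallyUniformly (lpPartial C₀ m c σ α) f atTop) {p : ℂ[X]}
    (hp : VertMono p) : VertMono (diffOp f p) := by
  have hd : Differentiable ℂ f := by
    rw [← differentiableOn_univ]
    exact (tendstoLocallyUniformlyOn_univ.2 hf).differentiableOn (Eventually.of_forall fun N =>
      (lpPartial_differentiable _ _ _ _ _ _).differentiableOn) isOpen_univ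
  obtain ⟨M, hM⟩ := (isCompact_sphere (0 : ℂ) 1).exists_bound_of_continuousOn
    hd.continuous.continuousOn
  have hU := tendstoLocallyUniformly_iff_forall_isCompact.1 hf _ (isCompact_sphere (0 : ℂ) 1)
  refine vertMono_diffOp_of_tendsto (lpPartial_differentiable C₀ m c σ α) hd (M := M + 1)
    (fun z hz => hU.tendsto_at (by simpa using hz)) ?_
    (fun N => vertMono_diffOp_lpPartial C₀ m c σ α N hp)
  filter_upwards [Metric.tendstoUniformlyOn_iff.1 hU 1 one_pos] with N hN z hz
  have hz' : z ∈ Metric.sphere (0 : ℂ) 1 := by simpa using hz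
  have h1 := hN z hz'
  rw [dist_comm, dist_eq_norm] at h1
  have h2 := norm_le_norm_add_norm_sub' (lpPartial C₀ m c σ α N z) (f z)
  linarith [hM z hz']

/-! ### Symbols of operators that preserve real-rootedness -/

/-- An operator commuting with `D` is a power series in `D`, with coefficients read off from the
constant terms of `T (Xᵏ)`. -/
lemma eq_sum_derivative (T : ℝ[X] →ₗ[ℝ] ℝ[X]) (hcomm : ∀ p, T (derivative p) = derivative (T p))
    (p : ℝ[X]) (M : ℕ) (hM : p.natDegree < M) :
    T p = ∑ k ∈ Finset.range M, C ((T (X ^ k)).coeff 0 / (k.factorial : ℝ)) * derivative^[k] p := by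
  have hiter : ∀ j q, T (derivative^[j] q) = derivative^[j] (T q) := by
    intro j
    induction j with
    | zero => simp
    | succ j ih => intro q; rw [Function.iterate_succ_apply, ih, hcomm, Function.iterate_succ_apply]
  have hfac : ∀ k : ℕ, (k.factorial : ℝ) ≠ 0 := fun k => by exact_mod_cast k.factorial_ne_zero
  have hc0 : ∀ (q : ℝ[X]) (j : ℕ), (derivative^[j] q).coeff 0 = j.factorial * q.coeff j := by
    intro q j
    rw [coeff_iterate_derivative]
    simp [Nat.descFactorial_self]
  have hL : ∀ q : ℝ[X], q.natDegree < M → (T q).coeff 0 = ∑ k ∈ Finset.range M,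
      (T (X ^ k)).coeff 0 / (k.factorial : ℝ) * (derivative^[k] q).coeff 0 := by
    intro q hq
    conv_lhs => rw [q.as_sum_range' M hq]
    rw [map_sum, finsetSum_coeff]
    refine Finset.sum_congr rfl fun k _ => ?_
    rw [hc0, ← C_mul_X_pow_eq_monomial, ← smul_eq_C_mul, map_smul, coeff_smul, smul_eq_mul,
      ← mul_assoc, div_mul_cancel₀ _ (hfac k), mul_comm]
  ext j
  refine mul_left_cancel₀ (hfac j) ?_
  rw [← hc0, ← hiter, hL _ (lt_of_le_of_lt (natDegree_iterate_derivative p j) (by omega)), ← hc0,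
    iterate_derivative_sum, finsetSum_coeff]
  refine Finset.sum_congr rfl fun k _ => ?_
  rw [iterate_derivative_C_mul, coeff_C_mul, ← Function.iterate_add_apply,
    ← Function.iterate_add_apply, add_comm]

/-- A multiset of real numbers, listed in order of decreasing modulus and padded by zeros. -/
lemma exists_sorted (s : Multiset ℂ) (hs : ∀ z ∈ s, z.im = 0) :
    ∃ A : ℕ → ℝ, (∀ j, s.card ≤ j → A j = 0) ∧ (Antitone fun j => |A j|) ∧
      ∀ g : ℂ → ℂ, (s.map g).prod = ∏ j ∈ Finset.range s.card, g (A j) := by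
  induction s using Quotient.inductionOn with
  | _ l =>
  let a : Fin l.length → ℝ := fun i => (l.get i).re
  let e := Tuple.sort fun i => -|a i|
  have he : Monotone fun i => -|a (e i)| := Tuple.monotone_sort fun i => -|a i|
  refine ⟨fun j => if h : j < l.length then a (e ⟨j, h⟩) else 0, ?_, ?_, ?_⟩
  · intro j hj
    have : ¬ j < l.length := by simpa using hj
    simp [this]
  · intro i j hij
    by_cases hj : j < l.length
    · have hi : i < l.length := lt_of_le_of_lt hij hj
      simp only [hi, hj, dif_pos]
      have := he (show (⟨i, hi⟩ : Fin l.length) ≤ ⟨j, hj⟩ from hij)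
      simpa using this
    · simp [hj]
  · intro g
    have hre : ∀ i : Fin l.length, ((a i : ℝ) : ℂ) = l.get i := by
      intro i
      have : (l.get i).im = 0 := hs _ (by simp)
      exact Complex.ext (by simp [a]) (by rw [Complex.ofReal_im, this])
    simp only [Multiset.quot_mk_to_coe, Multiset.map_coe, Multiset.prod_coe, Multiset.coe_card]
    rw [Finset.prod_range]
    simp only [Fin.is_lt, dif_pos, Fin.eta]
    rw [Equiv.prod_comp e fun i => g (a i)]
    simp only [hre]
    simp

/-- Applying `T` to `X ^ (n + 1 + m)` and reversing the result gives a polynomial with real roots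
whose coefficients are those of the symbol of `T`, up to factors `(n + 1)_k / (n + 1) ^ k` that
tend to `1`. -/
lemma exists_jensen_roots {T : ℝ[X] →ₗ[ℝ] ℝ[X]} {c : ℕ → ℝ}
    (hT : ∀ (p : ℝ[X]) (M : ℕ), p.natDegree < M →
      T p = ∑ k ∈ Finset.range M, C (c k) * derivative^[k] p)
    (hpres : ∀ p : ℝ[X], (∀ z ∈ (p.map (algebraMap ℝ ℂ)).roots, z.im = 0) →
        (T p = 0 ∨ ∀ z ∈ ((T p).map (algebraMap ℝ ℂ)).roots, z.im = 0))
    {m : ℕ} (hm : c m ≠ 0) (hmin : ∀ k < m, c k = 0) (n : ℕ) :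
    ∃ A : ℕ → ℝ, (∀ j, n + 1 ≤ j → A j = 0) ∧ (Antitone fun j => |A j|) ∧
      ∀ k, (∏ j ∈ Finset.range (n + 1), (1 - C (A j) * X) : ℝ[X]).coeff k =
        c (m + k) / c m * (((n + 1).descFactorial k : ℝ) / ((n + 1 : ℕ) : ℝ) ^ k) := by
  set N := n + 1 with hN
  have hN0 : (N : ℝ) ≠ 0 := by positivity
  set Q := T (X ^ (N + m)) with hQ
  have hQsum : Q = ∑ k ∈ Finset.range (N + 1),
      C (c (m + k) * ((N + m).descFactorial (m + k) : ℝ)) * X ^ (N - k) := by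
    rw [hQ, hT _ (m + (N + 1)) (by rw [natDegree_X_pow]; omega), Finset.sum_range_add,
      Finset.sum_eq_zero (fun k hk => by rw [hmin k (Finset.mem_range.1 hk)]; simp), zero_add]
    refine Finset.sum_congr rfl fun k _ => ?_
    rw [iterate_derivative_X_pow_eq_natCast_mul, C_mul, mul_assoc]
    congr 3
    omega
  set lead := c m * ((N + m).descFactorial m : ℝ) with hlead
  have hlead0 : lead ≠ 0 := mul_ne_zero hm (by
    exact_mod_cast (Nat.descFactorial_eq_zero_iff_lt (n := N + m) (k := m)).not.2 (by omega))
  have hQN : Q.coeff N = lead := by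
    rw [hQsum, finsetSum_coeff, Finset.sum_eq_single 0]
    · rw [coeff_C_mul_X_pow, if_pos (by omega), add_zero]
    · intro k hk hk0
      rw [coeff_C_mul_X_pow, if_neg (by have := Finset.mem_range.1 hk; omega)]
    · simp
  have hQdeg : Q.natDegree = N := by
    refine natDegree_eq_of_le_of_coeff_ne_zero ?_ (by rw [hQN]; exact hlead0)
    rw [hQsum]
    refine natDegree_sum_le_of_forall_le _ _ fun k _ => ?_
    exact (natDegree_C_mul_X_pow_le _ _).trans (Nat.sub_le _ _)
  have hQ0 : Q ≠ 0 := by rintro h; rw [h] at hQN; exact hlead0 (by simpa using hQN.symm)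
  have hroots : ∀ z ∈ (Q.map (algebraMap ℝ ℂ)).roots, z.im = 0 := by
    refine (hpres (X ^ (N + m)) fun z hz => ?_).resolve_left hQ0
    have hz0 : z = 0 := by
      have := (mem_roots'.1 hz).2
      simpa using this
    simp [hz0]
  have hsplit := IsAlgClosed.splits (Q.map (algebraMap ℝ ℂ))
  have hcard : (Q.map (algebraMap ℝ ℂ)).roots.card = N := by
    rw [← hsplit.natDegree_eq_card_roots, natDegree_map, hQdeg]
  obtain ⟨r, hr0, hranti, hrprod⟩ := exists_sorted _ hroots
  rw [hcard] at hr0 hrprod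
  have hQeval : ∀ t : ℝ, Q.eval t = lead * ∏ j ∈ Finset.range N, (t - r j) := by
    intro t
    have h1 := hsplit.eval_eq_prod_roots (t : ℂ)
    rw [hrprod fun a => (t : ℂ) - a, leadingCoeff_map, leadingCoeff, hQdeg, hQN] at h1
    have h2 : (Q.map (algebraMap ℝ ℂ)).eval (t : ℂ) = ((Q.eval t : ℝ) : ℂ) := by
      rw [eval_map]
      exact eval₂_at_apply (algebraMap ℝ ℂ) t
    rw [h2] at h1
    apply Complex.ofReal_injective
    rw [h1]
    push_cast
    rfl
  refine ⟨fun j => r j / N, fun j hj => by simp [hr0 j hj], ?_, ?_⟩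
  · intro i j hij
    simp only [abs_div]
    exact div_le_div_of_nonneg_right (hranti hij) (abs_nonneg _)
  have hpoly : (∏ j ∈ Finset.range N, (1 - C (r j / N) * X) : ℝ[X]) = ∑ k ∈ Finset.range (N + 1),
      C (c (m + k) / c m * ((N.descFactorial k : ℝ) / (N : ℝ) ^ k)) * X ^ k := by
    refine eq_of_infinite_eval_eq _ _ ((Set.finite_singleton (0 : ℝ)).infinite_compl.mono ?_)
    intro t ht
    have ht : t ≠ 0 := by simpa using ht
    -- Evaluating `Q` at `N / t` reverses its coefficients and rescales its roots by `1 / N`.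
    have hw : (N : ℝ) / t ≠ 0 := div_ne_zero hN0 ht
    have h1 := hQeval (N / t)
    rw [hQsum] at h1
    simp only [eval_finsetSum, eval_mul, eval_C, eval_pow, eval_X] at h1
    simp only [Set.mem_ofPred_eq, eval_finsetSum, eval_mul, eval_C, eval_pow, eval_X, eval_prod,
      eval_sub, eval_one]
    refine mul_left_cancel₀ (mul_ne_zero hlead0 (pow_ne_zero N hw)) ?_
    have h2 : lead * (N / t) ^ N * ∏ j ∈ Finset.range N, (1 - r j / N * t) =
        lead * ∏ j ∈ Finset.range N, (N / t - r j) := by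
      have h5 : ((N : ℝ) / t) ^ N = ∏ _j ∈ Finset.range N, (N : ℝ) / t := by
        rw [Finset.prod_const, Finset.card_range]
      rw [mul_assoc, h5, ← Finset.prod_mul_distrib]
      congr 1
      refine Finset.prod_congr rfl fun j _ => ?_
      field_simp
    rw [h2, ← h1, Finset.mul_sum]
    refine Finset.sum_congr rfl fun k hk => ?_
    have hk : k ≤ N := Nat.lt_succ_iff.1 (Finset.mem_range.1 hk)
    have h3 : (N + m).descFactorial (m + k) = N.descFactorial k * (N + m).descFactorial m := by
      have := Nat.descFactorial_mul_descFactorial (n := N + m) (k := m) (m := m + k) (by omega)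
      rw [← this]
      congr 2 <;> omega
    have h4 : ((N : ℝ) / t) ^ N = (N / t) ^ (N - k) * (N / t) ^ k := by
      rw [← pow_add]; congr 1; omega
    rw [h3, h4, hlead, div_pow (N : ℝ) t k]
    push_cast
    field_simp
  intro k
  rw [hpoly, finsetSum_coeff]
  simp only [coeff_C_mul_X_pow]
  rw [Finset.sum_ite_eq (Finset.range (N + 1)) k]
  split_ifs with h
  · rfl
  · rw [Nat.descFactorial_eq_zero_iff_lt.2 (by simpa using h)]
    simp

/-- The coefficients of order at most two give the first two power sums of the `A j`. -/
lemma coeff_prod_one_sub (A : ℕ → ℝ) (N : ℕ) :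
    (∏ j ∈ Finset.range N, (1 - C (A j) * X) : ℝ[X]).coeff 0 = 1 ∧
    (∏ j ∈ Finset.range N, (1 - C (A j) * X) : ℝ[X]).coeff 1 = -∑ j ∈ Finset.range N, A j ∧
    (∏ j ∈ Finset.range N, (1 - C (A j) * X) : ℝ[X]).coeff 2 * 2 =
      (∑ j ∈ Finset.range N, A j) ^ 2 - ∑ j ∈ Finset.range N, A j ^ 2 := by
  induction N with
  | zero => simp [coeff_one]
  | succ N ih =>
    obtain ⟨h0, h1, h2⟩ := ih
    rw [Finset.prod_range_succ, Finset.sum_range_succ, Finset.sum_range_succ]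
    set P := (∏ j ∈ Finset.range N, (1 - C (A j) * X) : ℝ[X])
    have e : P * (1 - C (A N) * X) = P - C (A N) * (P * X) := by ring
    rw [e]
    have k1 : (P * X).coeff 1 = P.coeff 0 := coeff_mul_X P 0
    have k2 : (P * X).coeff 2 = P.coeff 1 := coeff_mul_X P 1
    refine ⟨?_, ?_, ?_⟩
    · simp [h0]
    · rw [coeff_sub, coeff_C_mul, k1, h0, h1]; ring
    · rw [coeff_sub, coeff_C_mul, k2, h1]; linear_combination h2

lemma tendsto_descFactorial_div (k : ℕ) :
    Tendsto (fun n : ℕ => ((n + 1).descFactorial k : ℝ) / ((n + 1 : ℕ) : ℝ) ^ k) atTop (𝓝 1) := by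
  have h0 : ∀ᶠ n : ℕ in atTop, (n : ℝ) ^ k ≠ 0 := by
    filter_upwards [eventually_ne_atTop 0] with n hn
    exact pow_ne_zero _ (by exact_mod_cast hn)
  have h := (Asymptotics.isEquivalent_iff_tendsto_one h0).1 (isEquivalent_descFactorial k)
  exact h.comp (tendsto_add_atTop_nat 1)

/-- The exponent is linear in `re w` and `‖w‖ ^ 2`, so products of factors `1 - A j * z` are bounded in
terms of `∑ A j` and `∑ A j ^ 2` alone. -/
lemma norm_one_sub_le (w : ℂ) : ‖1 - w‖ ≤ Real.exp (-w.re + ‖w‖ ^ 2 / 2) := by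
  rw [← sq_le_sq₀ (norm_nonneg _) (Real.exp_pos _).le, ← Real.exp_nat_mul,
    ← Complex.normSq_eq_norm_sq, ← Complex.normSq_eq_norm_sq]
  have h : Complex.normSq (1 - w) = (2 : ℕ) * (-w.re + Complex.normSq w / 2) + 1 := by
    simp only [Complex.normSq_apply, Complex.sub_re, Complex.sub_im, Complex.one_re,
      Complex.one_im]
    push_cast
    ring
  rw [h]
  exact Real.add_one_le_exp _

/-- If the Jensen polynomials of `∑ c k X ^ k` (after removal of the factor `c m X ^ m`) have only real
roots, then this power series is the Taylor series of a function of LP form. -/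
lemma exists_lp_symbol {c : ℕ → ℝ} {m : ℕ} (hmin : ∀ k < m, c k = 0) (hm : c m ≠ 0)
    {A : ℕ → ℕ → ℝ} (hsupp : ∀ n j, n + 1 ≤ j → A n j = 0) (hanti : ∀ n, Antitone fun j => |A n j|)
    (hcoeff : ∀ n k, (∏ j ∈ Finset.range (n + 1), (1 - C (A n j) * X) : ℝ[X]).coeff k =
        c (m + k) / c m * (((n + 1).descFactorial k : ℝ) / ((n + 1 : ℕ) : ℝ) ^ k)) :
    ∃ (f : ℂ → ℂ) (s σ : ℝ) (α : ℕ → ℝ), (Summable fun j => α j ^ 2) ∧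
      TendstoLocallyUniformly (lpPartial (c m) m s σ α) f atTop ∧
      ∀ k, iteratedDeriv k f 0 / (k.factorial : ℂ) = c k := by
  have hck : ∀ k, Tendsto (fun n => (∏ j ∈ Finset.range (n + 1), (1 - C (A n j) * X) : ℝ[X]).coeff k)
      atTop (𝓝 (c (m + k) / c m)) := by
    intro k
    simp_rw [fun n => hcoeff n k]
    simpa using (tendsto_descFactorial_div k).const_mul (c (m + k) / c m)
  have hs : Tendsto (fun n => ∑ j ∈ Finset.range (n + 1), A n j) atTop (𝓝 (-(c (m + 1) / c m))) := by
    refine (hck 1).neg.congr fun n => ?_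
    rw [(coeff_prod_one_sub (A n) (n + 1)).2.1, neg_neg]
  have hp : Tendsto (fun n => ∑ j ∈ Finset.range (n + 1), A n j ^ 2) atTop
      (𝓝 ((-(c (m + 1) / c m)) ^ 2 - c (m + 2) / c m * 2)) := by
    refine ((hs.pow 2).sub ((hck 2).mul_const 2)).congr fun n => ?_
    rw [(coeff_prod_one_sub (A n) (n + 1)).2.2, sub_sub_cancel]
  obtain ⟨α, σ, P, φ, hsum, hφ, hPd, hP, hlim⟩ :=
    exists_laguerre_limit (d := fun n => n + 1) hsupp hanti hs hp
  set s := -(c (m + 1) / c m)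
  set f : ℂ → ℂ := fun z => (c m : ℂ) * z ^ m *
    Complex.exp (-(s : ℂ) * z - (σ : ℂ) ^ 2 / 2 * z ^ 2) * P z with hf
  have hfd : Differentiable ℂ f := by rw [hf]; fun_prop
  refine ⟨f, s, σ, α, hsum, ?_, fun k => ?_⟩
  · have hcont : Continuous fun z : ℂ => (c m : ℂ) * z ^ m *
        Complex.exp (-(s : ℂ) * z - (σ : ℂ) ^ 2 / 2 * z ^ 2) := by fun_prop
    have hconst : TendstoLocallyUniformly (fun (_ : ℕ) (z : ℂ) => (c m : ℂ) * z ^ m *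
        Complex.exp (-(s : ℂ) * z - (σ : ℂ) ^ 2 / 2 * z ^ 2)) (fun z => (c m : ℂ) * z ^ m *
        Complex.exp (-(s : ℂ) * z - (σ : ℂ) ^ 2 / 2 * z ^ 2)) atTop := by
      intro u hu z
      exact ⟨Set.univ, univ_mem, Eventually.of_forall fun n y _ => refl_mem_uniformity hu⟩
    exact hconst.mul₀ hP hcont hPd.continuous
  · let q : ℕ → ℝ[X] := fun n => C (c m) * (X ^ m *
      ∏ j ∈ Finset.range (n + 1), (1 - C (A n j) * X))
    let qc : ℕ → ℂ[X] := fun n => (q n).map (algebraMap ℝ ℂ)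
    have hqe : ∀ n z, (qc n).eval z = (c m : ℂ) * z ^ m *
        ∏ j ∈ Finset.range (n + 1), (1 - (A n j : ℂ) * z) := by
      intro n z
      simp [qc, q, Polynomial.map_prod, eval_prod, mul_assoc]
    have hqk : Tendsto (fun n => (q n).coeff k) atTop (𝓝 (c k)) := by
      simp only [q, coeff_C_mul, coeff_X_pow_mul']
      split_ifs with h
      · have := (hck (k - m)).const_mul (c m)
        rwa [Nat.add_sub_cancel' h, mul_div_cancel₀ _ hm] at this
      · rw [hmin k (by omega)]
        simp
    have hcoef := ((Complex.continuous_ofReal.tendsto _).comp hqk).comp hφ.tendsto_atTop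
    obtain ⟨S, hS⟩ := hs.norm.bddAbove_range
    obtain ⟨B, hB⟩ := hp.bddAbove_range
    have hder := tendsto_iteratedDeriv_zero (F := fun n z => (qc (φ n)).eval z)
      (M := |c m| * Real.exp (S + B / 2))
      (fun n => (qc (φ n)).differentiable) hfd ?_ ?_ k
    · refine tendsto_nhds_unique (hder.div_const _) (hcoef.congr fun n => ?_)
      rw [iteratedDeriv_eval_zero, mul_div_cancel_left₀ _ (by exact_mod_cast k.factorial_ne_zero)]
      simp [qc]
    · intro z _
      simp only [hqe, hf]
      rw [mul_assoc (_ * _)]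
      exact (hlim z).const_mul _
    · refine Eventually.of_forall fun n z hz => ?_
      simp only [hqe]
      rw [norm_mul, norm_mul, norm_pow, hz, one_pow, mul_one, Complex.norm_real, Real.norm_eq_abs,
        norm_prod]
      refine mul_le_mul_of_nonneg_left ?_ (abs_nonneg _)
      refine (Finset.prod_le_prod (fun _ _ => norm_nonneg _) fun j _ => norm_one_sub_le _).trans ?_
      rw [← Real.exp_sum, Real.exp_le_exp, Finset.sum_add_distrib]
      have e1 : ∑ j ∈ Finset.range (φ n + 1), -((A (φ n) j : ℂ) * z).re =
          -(∑ j ∈ Finset.range (φ n + 1), A (φ n) j) * z.re := by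
        rw [neg_mul, Finset.sum_mul, ← Finset.sum_neg_distrib]
        simp
      have e2 : ∑ j ∈ Finset.range (φ n + 1), ‖(A (φ n) j : ℂ) * z‖ ^ 2 / 2 =
          (∑ j ∈ Finset.range (φ n + 1), A (φ n) j ^ 2) / 2 := by
        rw [Finset.sum_div]
        simp [hz]
      rw [e1, e2]
      refine add_le_add ?_ (div_le_div_of_nonneg_right (hB ⟨φ n, rfl⟩) zero_le_two)
      refine (le_abs_self _).trans ?_
      rw [abs_mul, abs_neg]
      refine (mul_le_of_le_one_right (abs_nonneg _) ?_).trans (hS ⟨φ n, rfl⟩)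
      exact (Complex.abs_re_le_norm z).trans hz.le

/-- **Pólya–Benz theorem.** Let `T : ℝ[X] → ℝ[X]` be a nonzero linear map commuting with
differentiation. Then `T` preserves real-rootedness (sending real-rooted polynomials to `0` or
to real-rooted polynomials) if and only if there is an entire function `f` of Laguerre–Pólya
form with `T p = ∑_{k≥0} (f^{(k)}(0)/k!)·p^{(k)}` for every `p`. -/
theorem polya_benz (T : Polynomial ℝ →ₗ[ℝ] Polynomial ℝ) (hT : T ≠ 0)
    (hcomm : ∀ p : Polynomial ℝ,
      T (Polynomial.derivative p) = Polynomial.derivative (T p)) :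
    (∀ p : Polynomial ℝ, (∀ z ∈ (p.map (algebraMap ℝ ℂ)).roots, z.im = 0) →
        (T p = 0 ∨ ∀ z ∈ ((T p).map (algebraMap ℝ ℂ)).roots, z.im = 0))
    ↔
    (∃ (f : ℂ → ℂ) (C : ℝ) (m : ℕ) (c σ : ℝ) (α : ℕ → ℝ),
      C ≠ 0 ∧ (Summable fun j => α j ^ 2) ∧
      TendstoLocallyUniformly
        (fun (N : ℕ) (z : ℂ) => (C : ℂ) * z ^ m *
            Complex.exp (-(c : ℂ) * z - (σ : ℂ) ^ 2 / 2 * z ^ 2) *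
            ∏ j ∈ Finset.range N, ((1 - (α j : ℂ) * z) * Complex.exp ((α j : ℂ) * z)))
        f atTop ∧
      ∀ p : Polynomial ℝ, (T p).map (algebraMap ℝ ℂ) =
        ∑ k ∈ Finset.range (p.natDegree + 1),
          Polynomial.C (iteratedDeriv k f 0 / (Nat.factorial k : ℂ)) *
            (Polynomial.derivative^[k] (p.map (algebraMap ℝ ℂ)))) := by
  constructor
  · intro hpres
    set c : ℕ → ℝ := fun k => (T (X ^ k)).coeff 0 / (k.factorial : ℝ) with hc
    have hTsum : ∀ (p : ℝ[X]) (M : ℕ), p.natDegree < M →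
        T p = ∑ k ∈ Finset.range M, Polynomial.C (c k) * derivative^[k] p :=
      fun p M => eq_sum_derivative T hcomm p M
    have hex : ∃ k, c k ≠ 0 := by
      by_contra! h
      refine hT (LinearMap.ext fun p => ?_)
      rw [hTsum p _ (Nat.lt_succ_self _)]
      simp [h]
    classical
    have hm := Nat.find_spec hex
    have hmin : ∀ k < Nat.find hex, c k = 0 := fun k hk => by
      simpa using Nat.find_min hex hk
    choose A hsupp hanti hcoeff using exists_jensen_roots hTsum hpres hm hmin
    obtain ⟨f, s, σ, α, hα, hf, hfc⟩ := exists_lp_symbol hmin hm hsupp hanti hcoeff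
    refine ⟨f, _, _, s, σ, α, hm, hα, hf, fun p => ?_⟩
    simp_rw [hfc]
    rw [hTsum p _ (Nat.lt_succ_self _), Polynomial.map_sum]
    refine Finset.sum_congr rfl fun k _ => ?_
    rw [Polynomial.map_mul, Polynomial.map_C, iterate_derivative_map]
    rfl
  · rintro ⟨f, C₀, m, c, σ, α, -, -, hf, hTf⟩ p hp
    -- The second alternative covers `T p = 0` too: the root multiset of `0` is empty.
    refine Or.inr ?_
    have h : (T p).map (algebraMap ℝ ℂ) = diffOp f (p.map (algebraMap ℝ ℂ)) := by
      rw [hTf, diffOp, natDegree_map]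
    rw [h]
    exact (vertMono_diffOp_lp hf (vertMono_of_roots hp)).roots_real
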